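/- Let r be a ranker, a ∈ A, u ∈ A+ with a ∈ alph(u), and let u = u_- a u_+ be the a-left factorization of u. If r starts with an X-letter, then: (1) r is condensed on u_+ if and only if X_a r is condensed on u; (2) r is condensed on u_- if and only if r is defined on u_- and r is condensed on u; equivalently, if and only if r is condensed on u, r contains no occurrence of X_a or Y_a, and, writing p = X_{b_1}⋯X_{b_k} (k ≥ 1) for the initial X-block of r, the ranker X_a Y_{b_k}⋯Y_{b_1} is defined on u. If r starts with a Y-letter, then: (3) r is condensed on u_- if and only if X_a r is condensed on u; (4) r is condensed on u_+ if and only if r is defined on u_+ and r is condensed on u; equivalently, if and only if r is condensed on u and, writing p = Y_{b_1}⋯Y_{b_k} (k ≥ 1) for the initial Y-block of r, the ranker p Y_a is defined on u. -/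

import Mathlib

namespace RankerPaper

variable {A : Type*} [DecidableEq A]

/-- Letters of rankers: `X a` ("next `a` to the right") and `Y a` ("next `a` to the left"). -/
inductive RLetter (A : Type*) where
  | X : A → RLetter A
  | Y : A → RLetter A
  deriving DecidableEq

/-- Least `a`-position of `u` strictly greater than `q` (positions are 1-indexed). -/
def nextOcc (u : List A) (a : A) (q : ℕ) : Option ℕ :=
  ((List.range (u.length + 2)).filter (fun i => decide (q < i ∧ u[i-1]? = some a))).head?

/-- Greatest `a`-position of `u` strictly less than `q` (positions are 1-indexed). -/
def prevOcc (u : List A) (a : A) (q : ℕ) : Option ℕ :=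
  ((List.range (u.length + 2)).filter
    (fun i => decide (1 ≤ i ∧ i < q ∧ u[i-1]? = some a))).getLast?

/-- One evaluation step of a ranker letter from position `q`. -/
def stepR (u : List A) : RLetter A → ℕ → Option ℕ
  | .X a, q => nextOcc u a q
  | .Y a, q => prevOcc u a q

/-- Evaluation of a ranker from position `q`, processing letters left to right. -/
def evalFrom (u : List A) : List (RLetter A) → ℕ → Option ℕ
  | [], q => some q
  | z :: r, q => (stepR u z q).bind (evalFrom u r)

/-- Starting position: `0` for an `X`-letter, `|u|+1` for a `Y`-letter. -/
def startPos (u : List A) : RLetter A → ℕ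
  | .X _ => 0
  | .Y _ => u.length + 1

/-- The position `r(u)` defined by the ranker `r` on `u` (`none` if undefined;
empty rankers are considered undefined, rankers being nonempty words). -/
def evalR (u : List A) (r : List (RLetter A)) : Option ℕ :=
  match r with
  | [] => none
  | z :: t => evalFrom u (z :: t) (startPos u z)

/-- `r` is defined on `u`. -/
def Defined (u : List A) (r : List (RLetter A)) : Prop := (evalR u r).isSome

/-- The position `r(u)` (defaulting to `0` when undefined). -/
def pos (u : List A) (r : List (RLetter A)) : ℕ := (evalR u r).getD 0

/-- Do two ranker letters have the same direction? -/
def sameDir : RLetter A → RLetter A → Bool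
  | .X _, .X _ => true
  | .Y _, .Y _ => true
  | _, _ => false

/-- Number of (alternating) blocks of a ranker. -/
def numBlocks : List (RLetter A) → ℕ
  | [] => 0
  | [_] => 1
  | z :: w :: t => (if sameDir z w then 0 else 1) + numBlocks (w :: t)

def startsX (r : List (RLetter A)) : Prop := ∃ a t, r = RLetter.X a :: t
def startsY (r : List (RLetter A)) : Prop := ∃ a t, r = RLetter.Y a :: t
def endsX (r : List (RLetter A)) : Prop := ∃ a, r.getLast? = some (RLetter.X a)
def endsY (r : List (RLetter A)) : Prop := ∃ a, r.getLast? = some (RLetter.Y a)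

/-- `R^X_{m,n}`: rankers with exactly `m` blocks, depth `n`, starting with an `X`-block. -/
def RX (m n : ℕ) (r : List (RLetter A)) : Prop :=
  numBlocks r = m ∧ r.length = n ∧ startsX r

/-- `R^Y_{m,n}`: rankers with exactly `m` blocks, depth `n`, starting with a `Y`-block. -/
def RY (m n : ℕ) (r : List (RLetter A)) : Prop :=
  numBlocks r = m ∧ r.length = n ∧ startsY r

/-- `uR^X_{m,n}`. -/
def uRX (m n : ℕ) (r : List (RLetter A)) : Prop :=
  (∃ m' n', m' ≤ m ∧ n' ≤ n ∧ RX m' n' r) ∨ (∃ m' n', m' < m ∧ n' < n ∧ RY m' n' r)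

/-- `uR^Y_{m,n}`. -/
def uRY (m n : ℕ) (r : List (RLetter A)) : Prop :=
  (∃ m' n', m' ≤ m ∧ n' ≤ n ∧ RY m' n' r) ∨ (∃ m' n', m' < m ∧ n' < n ∧ RX m' n' r)

/-- `uR_{m,n} = uR^X_{m,n} ∪ uR^Y_{m,n}`. -/
def uR (m n : ℕ) (r : List (RLetter A)) : Prop := uRX m n r ∨ uRY m n r

/-- `uR^X_m = ∪_{n ≥ m} uR^X_{m,n}`. -/
def uRXm (m : ℕ) (r : List (RLetter A)) : Prop := ∃ n, m ≤ n ∧ uRX m n r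

/-- `uR^Y_m = ∪_{n ≥ m} uR^Y_{m,n}`. -/
def uRYm (m : ℕ) (r : List (RLetter A)) : Prop := ∃ n, m ≤ n ∧ uRY m n r

/-- `r = Z₁ ⋯ Z_n` is condensed on `u`: it is defined on `u` and there is a chain of
open intervals `(0;|u|+1) = (i₀;j₀) ⊃ (i₁;j₁) ⊃ ⋯ ⊃ (i_{n-1};j_{n-1}) ∋ r(u)`
updated according to the pairs `Z_ℓ Z_{ℓ+1}`. -/
def Condensed (u : List A) (r : List (RLetter A)) : Prop :=
  ∃ (p : ℕ) (i j : ℕ → ℕ),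
    evalR u r = some p ∧
    i 0 = 0 ∧ j 0 = u.length + 1 ∧
    (∀ ℓ a b, 1 ≤ ℓ → r[ℓ-1]? = some (RLetter.X a) → r[ℓ]? = some (RLetter.X b) →
        nextOcc u a (i (ℓ-1)) = some (i ℓ) ∧ j ℓ = j (ℓ-1)) ∧
    (∀ ℓ a b, 1 ≤ ℓ → r[ℓ-1]? = some (RLetter.Y a) → r[ℓ]? = some (RLetter.Y b) →
        i ℓ = i (ℓ-1) ∧ prevOcc u a (j (ℓ-1)) = some (j ℓ)) ∧
    (∀ ℓ a b, 1 ≤ ℓ → r[ℓ-1]? = some (RLetter.X a) → r[ℓ]? = some (RLetter.Y b) →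
        i ℓ = i (ℓ-1) ∧ nextOcc u a (i (ℓ-1)) = some (j ℓ)) ∧
    (∀ ℓ a b, 1 ≤ ℓ → r[ℓ-1]? = some (RLetter.Y a) → r[ℓ]? = some (RLetter.X b) →
        prevOcc u a (j (ℓ-1)) = some (i ℓ) ∧ j ℓ = j (ℓ-1)) ∧
    (∀ ℓ, 1 ≤ ℓ → ℓ < r.length →
        i (ℓ-1) ≤ i ℓ ∧ j ℓ ≤ j (ℓ-1) ∧ (i (ℓ-1) < i ℓ ∨ j ℓ < j (ℓ-1))) ∧
    i (r.length - 1) < p ∧ p < j (r.length - 1)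

/-- `u` and `v` agree on rankers from the set `R`. -/
def AgreeDef (R : List (RLetter A) → Prop) (u v : List A) : Prop :=
  ∀ r, R r → (Defined u r ↔ Defined v r)

/-- `u` and `v` agree on condensed rankers from the set `R`. -/
def AgreeCond (R : List (RLetter A) → Prop) (u v : List A) : Prop :=
  ∀ r, R r → (Condensed u r ↔ Condensed v r)

/-- `u ⊳_{m,n} v`. -/
def trir (m n : ℕ) (u v : List A) : Prop := AgreeCond (uRX m n) u v

/-- `u ⊲_{m,n} v`. -/
def tril (m n : ℕ) (u v : List A) : Prop := AgreeCond (uRY m n) u v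

/-- The alphabet (set of letters) of a word. -/
def alph (u : List A) : Finset A := u.toFinset

/-- Condition (WI 1). -/
def WI1 (m n : ℕ) (u v : List A) : Prop := AgreeDef (uR m n) u v

/-- Condition (WI 2). -/
def WI2 (m n : ℕ) (u v : List A) : Prop :=
  ∀ r r', uR m n r → uR (m-1) (n-1) r' →
    Defined u r → Defined v r → Defined u r' → Defined v r' →
    compare (pos u r) (pos u r') = compare (pos v r) (pos v r')

/-- Condition (WI 3). -/
def WI3 (m n : ℕ) (u v : List A) : Prop :=
  ∀ r r', uR m n r → uR m (n-1) r' →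
    ((endsX r ∧ endsY r') ∨ (endsY r ∧ endsX r')) →
    Defined u r → Defined v r → Defined u r' → Defined v r' →
    compare (pos u r) (pos u r') = compare (pos v r) (pos v r')

/-- Condition (WI 1c). -/
def WI1c (m n : ℕ) (u v : List A) : Prop := AgreeCond (uR m n) u v

/-- Condition (WI 2c). -/
def WI2c (m n : ℕ) (u v : List A) : Prop :=
  ∀ r r', uR m n r → uR (m-1) (n-1) r' →
    Condensed u r → Condensed v r → Condensed u r' → Condensed v r' →
    compare (pos u r) (pos u r') = compare (pos v r) (pos v r')

/-- Condition (WI 3c). -/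
def WI3c (m n : ℕ) (u v : List A) : Prop :=
  ∀ r r', uR m n r → uR m (n-1) r' →
    ((endsX r ∧ endsY r') ∨ (endsY r ∧ endsX r')) →
    Condensed u r → Condensed v r → Condensed u r' → Condensed v r' →
    compare (pos u r) (pos u r') = compare (pos v r) (pos v r')

/-!
A ranker can be read with its current position `q` as part of the state: an `X`-letter then shrinks
`(i;j)` to `(q;j)`, a `Y`-letter shrinks it to `(i;q)`, and in both cases the new position has to
lie in the smaller interval. Condensedness thus depends only on the factor of the word between the
endpoints, which gives the descriptions by `X_a r`, whose first step restricts to one side of the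
first `a`.

While the initial `X`-block is read, the right endpoint `j` stays put, and the first `Y`-letter
forgets it. Enlarging `j` therefore loses exactly the condition that the block stays below `j`. By a
Galois connection between next and previous occurrences, this holds iff the reversed block read
leftwards from `j` is defined. The case of an initial `Y`-block is symmetric.
-/

section Sorted

variable {α : Type*} [Preorder α] {l : List α} {x : α}

theorem mem_head?_iff_isLeast (hl : l.SortedLT) : x ∈ l.head? ↔ IsLeast {y | y ∈ l} x := by
  cases l with
  | nil => simp [IsLeast]
  | cons y l =>
    have hlt : ∀ z ∈ l, y < z := (List.pairwise_cons.1 hl.pairwise).1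
    have hy : IsLeast {z | z ∈ y :: l} y :=
      ⟨List.mem_cons_self, by simpa [lowerBounds] using fun z hz => (hlt z hz).le⟩
    constructor
    · rintro ⟨⟩
      exact hy
    · rintro ⟨hx, hmin⟩
      rcases List.mem_cons.1 hx with rfl | hx
      · rfl
      · exact absurd (hlt x hx) (hmin List.mem_cons_self).not_gt

theorem mem_getLast?_iff_isGreatest (hl : l.SortedLT) :
    x ∈ l.getLast? ↔ IsGreatest {y | y ∈ l} x := by
  have hset : {y | y ∈ l} = {y | y ∈ l.reverse} := by simp only [List.mem_reverse]
  rw [List.getLast?_eq_head?_reverse, hset]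
  exact mem_head?_iff_isLeast (α := αᵒᵈ) (List.pairwise_reverse.2 hl.pairwise).sortedLT

end Sorted

section Occurrences

/-- The `a`-positions of `u`, with the letters of `u` numbered from `1`; the condition `1 ≤ k`
keeps the truncated `0 - 1` from turning `0` into a position. -/
def occ {α : Type*} (u : List α) (a : α) : Set ℕ := {k | 1 ≤ k ∧ u[k - 1]? = some a}

section

variable {α : Type*} {u : List α} {a : α} {k : ℕ}

theorem one_le_of_mem_occ (hk : k ∈ occ u a) : 1 ≤ k := hk.1

theorem le_length_of_mem_occ (hk : k ∈ occ u a) : k ≤ u.length := by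
  obtain ⟨h, -⟩ := List.getElem?_eq_some_iff.1 hk.2
  omega

theorem mem_of_mem_occ (hk : k ∈ occ u a) : a ∈ u := List.mem_of_getElem? hk.2

theorem add_length_mem_occ_iff (x y : List α) (hk : 1 ≤ k) (hku : k ≤ u.length) :
    k + x.length ∈ occ (x ++ u ++ y) a ↔ k ∈ occ u a := by
  have hget : (x ++ u ++ y)[k + x.length - 1]? = u[k - 1]? := by
    rw [List.append_assoc, List.getElem?_append_right (by omega),
      List.getElem?_append_left (by omega), show k + x.length - 1 - x.length = k - 1 by omega]
  simp only [occ, Set.mem_ofPred_eq, hget, hk, true_and, and_iff_right_iff_imp]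
  omega

end

variable {u : List A} {a : A} {p q i j : ℕ}

theorem mem_nextOcc_iff_isLeast : p ∈ nextOcc u a q ↔ IsLeast (occ u a ∩ Set.Ioi q) p := by
  rw [nextOcc, mem_head?_iff_isLeast (List.pairwise_lt_range.filter _).sortedLT]
  congr! 1
  ext k
  have hlt : k ∈ occ u a → k < u.length + 2 := fun hk => by
    have := le_length_of_mem_occ hk
    omega
  simp only [occ, Set.mem_ofPred_eq] at hlt
  simp only [occ, List.mem_filter, List.mem_range, decide_eq_true_eq, Set.mem_inter_iff,
    Set.mem_ofPred_eq, Set.mem_Ioi]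
  grind

theorem mem_prevOcc_iff_isGreatest : p ∈ prevOcc u a q ↔ IsGreatest (occ u a ∩ Set.Iio q) p := by
  rw [prevOcc, mem_getLast?_iff_isGreatest (List.pairwise_lt_range.filter _).sortedLT]
  congr! 1
  ext k
  have hlt : k ∈ occ u a → k < u.length + 2 := fun hk => by
    have := le_length_of_mem_occ hk
    omega
  simp only [occ, Set.mem_ofPred_eq] at hlt
  simp only [occ, List.mem_filter, List.mem_range, decide_eq_true_eq, Set.mem_inter_iff,
    Set.mem_ofPred_eq, Set.mem_Iio]
  grind

theorem mem_occ_of_mem_nextOcc (h : p ∈ nextOcc u a q) : p ∈ occ u a :=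
  (mem_nextOcc_iff_isLeast.1 h).1.1

theorem mem_occ_of_mem_prevOcc (h : p ∈ prevOcc u a q) : p ∈ occ u a :=
  (mem_prevOcc_iff_isGreatest.1 h).1.1

theorem lt_of_mem_nextOcc (h : p ∈ nextOcc u a q) : q < p := (mem_nextOcc_iff_isLeast.1 h).1.2

theorem lt_of_mem_prevOcc (h : p ∈ prevOcc u a q) : p < q := (mem_prevOcc_iff_isGreatest.1 h).1.2

theorem exists_mem_nextOcc_lt_iff :
    (∃ p ∈ nextOcc u a i, p < j) ↔ ∃ k ∈ occ u a, i < k ∧ k < j := by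
  constructor
  · rintro ⟨p, hp, hpj⟩
    exact ⟨p, mem_occ_of_mem_nextOcc hp, lt_of_mem_nextOcc hp, hpj⟩
  · rintro ⟨k, hk, hik, hkj⟩
    have hne : (occ u a ∩ Set.Ioi i).Nonempty := ⟨k, hk, hik⟩
    have hleast := isLeast_csInf hne
    exact ⟨_, mem_nextOcc_iff_isLeast.2 hleast, (hleast.2 ⟨hk, hik⟩).trans_lt hkj⟩

theorem exists_mem_prevOcc_gt_iff :
    (∃ p ∈ prevOcc u a j, i < p) ↔ ∃ k ∈ occ u a, i < k ∧ k < j := by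
  constructor
  · rintro ⟨p, hp, hip⟩
    exact ⟨p, mem_occ_of_mem_prevOcc hp, hip, lt_of_mem_prevOcc hp⟩
  · rintro ⟨k, hk, hik, hkj⟩
    have hne : (occ u a ∩ Set.Iio j).Nonempty := ⟨k, hk, hkj⟩
    obtain ⟨p, hp⟩ := BddAbove.exists_isGreatest_of_nonempty ⟨j, fun _ h => h.2.le⟩ hne
    exact ⟨p, mem_prevOcc_iff_isGreatest.2 hp, hik.trans_le (hp.2 ⟨hk, hkj⟩)⟩

theorem exists_mem_nextOcc_lt_iff_exists_mem_prevOcc_gt :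
    (∃ p ∈ nextOcc u a i, p < j) ↔ ∃ p ∈ prevOcc u a j, i < p :=
  exists_mem_nextOcc_lt_iff.trans exists_mem_prevOcc_gt_iff.symm

theorem add_length_mem_nextOcc_iff (x y : List A) (hp : p ≤ u.length) :
    p + x.length ∈ nextOcc (x ++ u ++ y) a (q + x.length) ↔ p ∈ nextOcc u a q := by
  simp only [mem_nextOcc_iff_isLeast]
  constructor
  · rintro ⟨⟨hocc, hqp⟩, hmin⟩
    rw [Set.mem_Ioi] at hqp
    refine ⟨⟨(add_length_mem_occ_iff x y (by omega) hp).1 hocc, by simpa using hqp⟩, ?_⟩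
    rintro k ⟨hk, hqk⟩
    have hkx := (add_length_mem_occ_iff x y (one_le_of_mem_occ hk) (le_length_of_mem_occ hk)).2 hk
    exact Nat.le_of_add_le_add_right (hmin ⟨hkx, by simpa using hqk⟩)
  · rintro ⟨⟨hocc, hqp⟩, hmin⟩
    have hpx := (add_length_mem_occ_iff x y (one_le_of_mem_occ hocc) hp).2 hocc
    refine ⟨⟨hpx, by simpa using hqp⟩, ?_⟩
    rintro k ⟨hk, hqk⟩
    by_contra! hkp
    rw [Set.mem_Ioi] at hqk
    obtain ⟨k, rfl⟩ := Nat.exists_eq_add_of_le' (show x.length ≤ k by omega)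
    have := hmin ⟨(add_length_mem_occ_iff x y (by omega) (by omega)).1 hk, by simpa using hqk⟩
    omega

theorem add_length_mem_prevOcc_iff (x y : List A) (hp : 1 ≤ p) (hq : q ≤ u.length + 1) :
    p + x.length ∈ prevOcc (x ++ u ++ y) a (q + x.length) ↔ p ∈ prevOcc u a q := by
  simp only [mem_prevOcc_iff_isGreatest]
  constructor
  · rintro ⟨⟨hocc, hpq⟩, hmax⟩
    rw [Set.mem_Iio] at hpq
    refine ⟨⟨(add_length_mem_occ_iff x y hp (by omega)).1 hocc, by simpa using hpq⟩, ?_⟩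
    rintro k ⟨hk, hkq⟩
    have hkx := (add_length_mem_occ_iff x y (one_le_of_mem_occ hk) (le_length_of_mem_occ hk)).2 hk
    exact Nat.le_of_add_le_add_right (hmax ⟨hkx, by simpa using hkq⟩)
  · rintro ⟨⟨hocc, hpq⟩, hmax⟩
    refine ⟨⟨(add_length_mem_occ_iff x y hp (le_length_of_mem_occ hocc)).2 hocc,
      by simpa using hpq⟩, ?_⟩
    rintro k ⟨hk, hkq⟩
    by_contra! hpk
    rw [Set.mem_Iio] at hkq
    obtain ⟨k, rfl⟩ := Nat.exists_eq_add_of_le' (show x.length ≤ k by omega)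
    have := hmax ⟨(add_length_mem_occ_iff x y (by omega) (by omega)).1 hk, by simpa using hkq⟩
    omega

theorem length_add_one_mem_nextOcc_append_cons {um up : List A} (ha : a ∉ um) :
    um.length + 1 ∈ nextOcc (um ++ a :: up) a 0 := by
  rw [mem_nextOcc_iff_isLeast]
  refine ⟨⟨⟨by omega, by simp⟩, by simp⟩, ?_⟩
  rintro k ⟨hk, -⟩
  by_contra! hlt
  have hk' : k ∈ occ um a :=
    (add_length_mem_occ_iff [] _ (one_le_of_mem_occ hk) (by omega)).1 hk
  exact ha (mem_of_mem_occ hk')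

end Occurrences

section Evaluation

variable {u : List A} {r s t : List (RLetter A)} {z : RLetter A} {a : A} {bs : List A}
  {i j p q x : ℕ}

/-- The letter of the alphabet that a ranker letter searches for. -/
def RLetter.letter {α : Type*} : RLetter α → α
  | .X a => a
  | .Y a => a

theorem mem_occ_of_mem_stepR (h : p ∈ stepR u z q) : p ∈ occ u z.letter := by
  cases z with
  | X a => exact mem_occ_of_mem_nextOcc h
  | Y a => exact mem_occ_of_mem_prevOcc h

theorem mem_evalFrom_cons : x ∈ evalFrom u (z :: t) q ↔ ∃ p ∈ stepR u z q, x ∈ evalFrom u t p :=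
  Option.mem_bind_iff

theorem evalFrom_append : evalFrom u (r ++ s) q = (evalFrom u r q).bind (evalFrom u s) := by
  induction r generalizing q with
  | nil => rfl
  | cons z t ih =>
    simp only [List.cons_append, evalFrom, Option.bind_assoc, ih]

theorem mem_evalFrom_append_singleton :
    x ∈ evalFrom u (r ++ [z]) q ↔ ∃ p ∈ evalFrom u r q, x ∈ stepR u z p := by
  simp only [evalFrom_append, Option.mem_bind_iff, evalFrom, Option.mem_some,
    exists_eq_right]

theorem one_le_of_mem_evalFrom (hq : 1 ≤ q) (hx : x ∈ evalFrom u r q) : 1 ≤ x := by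
  induction r generalizing q with
  | nil => exact Option.mem_some.1 hx ▸ hq
  | cons z t ih =>
    obtain ⟨p, hp, hx⟩ := mem_evalFrom_cons.1 hx
    exact ih (one_le_of_mem_occ (mem_occ_of_mem_stepR hp)) hx

theorem letter_mem_of_mem_evalFrom (hx : x ∈ evalFrom u r q) (hz : z ∈ r) : z.letter ∈ u := by
  induction r generalizing q with
  | nil => exact absurd hz List.not_mem_nil
  | cons w t ih =>
    obtain ⟨p, hp, hx⟩ := mem_evalFrom_cons.1 hx
    rcases List.mem_cons.1 hz with rfl | hz
    · exact mem_of_mem_occ (mem_occ_of_mem_stepR hp)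
    · exact ih hx hz

theorem le_of_mem_evalFrom_map_X (hx : x ∈ evalFrom u (bs.map RLetter.X) q) : q ≤ x := by
  induction bs generalizing q with
  | nil => exact (Option.mem_some.1 hx).le
  | cons b bs ih =>
    obtain ⟨p, hp, hx⟩ := mem_evalFrom_cons.1 hx
    exact (lt_of_mem_nextOcc hp).le.trans (ih hx)

theorem le_of_mem_evalFrom_map_Y (hx : x ∈ evalFrom u (bs.map RLetter.Y) q) : x ≤ q := by
  induction bs generalizing q with
  | nil => exact (Option.mem_some.1 hx).ge
  | cons b bs ih =>
    obtain ⟨p, hp, hx⟩ := mem_evalFrom_cons.1 hx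
    exact (ih hx).trans (lt_of_mem_prevOcc hp).le

/-- Both sides say that `bs` is a scattered subword of `u` strictly between `i` and `j`. -/
theorem exists_mem_evalFrom_map_X_lt_iff :
    (∃ x ∈ evalFrom u (bs.map RLetter.X) i, x < j) ↔
      ∃ y ∈ evalFrom u (bs.reverse.map RLetter.Y) j, i < y := by
  induction bs generalizing i with
  | nil => simp [evalFrom]
  | cons b bs ih =>
    calc (∃ x ∈ evalFrom u ((b :: bs).map RLetter.X) i, x < j)
      _ ↔ ∃ p ∈ nextOcc u b i, ∃ x ∈ evalFrom u (bs.map RLetter.X) p, x < j := by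
        simp only [List.map_cons, mem_evalFrom_cons, stepR]
        grind
      _ ↔ ∃ p ∈ nextOcc u b i, ∃ y ∈ evalFrom u (bs.reverse.map RLetter.Y) j, p < y := by
        simp only [ih]
      _ ↔ ∃ y ∈ evalFrom u (bs.reverse.map RLetter.Y) j, ∃ p ∈ nextOcc u b i, p < y := by
        grind
      _ ↔ ∃ y ∈ evalFrom u (bs.reverse.map RLetter.Y) j, ∃ p ∈ prevOcc u b y, i < p := by
        simp only [exists_mem_nextOcc_lt_iff_exists_mem_prevOcc_gt]
      _ ↔ ∃ y ∈ evalFrom u ((b :: bs).reverse.map RLetter.Y) j, i < y := by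
        simp only [List.reverse_cons, List.map_append, List.map_cons, List.map_nil,
          mem_evalFrom_append_singleton, stepR]
        grind

theorem evalR_of_startsX (hr : startsX r) : evalR u r = evalFrom u r 0 := by
  obtain ⟨b, t, rfl⟩ := hr
  rfl

theorem evalR_of_startsY (hr : startsY r) : evalR u r = evalFrom u r (u.length + 1) := by
  obtain ⟨b, t, rfl⟩ := hr
  rfl

theorem letter_mem_of_defined (hr : Defined u r) (hz : z ∈ r) : z.letter ∈ u := by
  obtain ⟨x, hx⟩ := Option.isSome_iff_exists.1 hr
  cases r with
  | nil => exact absurd hz List.not_mem_nil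
  | cons w t => exact letter_mem_of_mem_evalFrom hx hz

theorem defined_X_cons_reverse_map_Y_iff (hp : p ∈ nextOcc u a 0) :
    Defined u (RLetter.X a :: bs.reverse.map RLetter.Y) ↔
      ∃ x ∈ evalFrom u (bs.map RLetter.X) 0, x < p := by
  rw [exists_mem_evalFrom_map_X_lt_iff, Defined, Option.isSome_iff_exists]
  have heval : evalR u (RLetter.X a :: bs.reverse.map RLetter.Y) =
      evalFrom u (bs.reverse.map RLetter.Y) p := by
    simp only [evalR, evalFrom, startPos, stepR, Option.mem_def.1 hp, Option.bind_some]
  rw [heval]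
  exact exists_congr fun y =>
    ⟨fun hy => ⟨hy, one_le_of_mem_evalFrom (lt_of_mem_nextOcc hp) hy⟩, And.left⟩

theorem defined_map_Y_append_Y_iff (hp : p ∈ nextOcc u a 0) :
    Defined u (bs.map RLetter.Y ++ [RLetter.Y a]) ↔
      ∃ x ∈ evalFrom u (bs.map RLetter.Y) (u.length + 1), p < x := by
  have hY : startsY (bs.map RLetter.Y ++ [RLetter.Y a]) := by
    cases bs with
    | nil => exact ⟨a, [], rfl⟩
    | cons b bs => exact ⟨b, _, rfl⟩
  have hlt : ∀ x, p < x ↔ ∃ y, y ∈ prevOcc u a x := fun x => calc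
    p < x ↔ ∃ p' ∈ nextOcc u a 0, p' < x := by
      simp only [Option.mem_def.1 hp, Option.mem_some, exists_eq_left']
    _ ↔ ∃ y ∈ prevOcc u a x, 0 < y := exists_mem_nextOcc_lt_iff_exists_mem_prevOcc_gt
    _ ↔ ∃ y, y ∈ prevOcc u a x := exists_congr fun y =>
      and_iff_left_of_imp fun hy => one_le_of_mem_occ (mem_occ_of_mem_prevOcc hy)
  rw [Defined, evalR_of_startsY hY, Option.isSome_iff_exists]
  simp only [← Option.mem_def, mem_evalFrom_append_singleton, stepR, hlt]
  grind

end Evaluation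

section CondensedFrom

variable {u : List A} {r t : List (RLetter A)} {z w : RLetter A} {a : A} {bs : List A}
  {i j i' j' p q : ℕ}

/-- `r` is condensed on `u` when started at position `q` inside the interval `(i;j)`. An `X`-letter
discards everything up to `q` and a `Y`-letter everything from `q` on, so that, unlike in
`Condensed`, the new interval does not depend on the letter that follows. -/
def CondensedFrom (u : List A) : ℕ → ℕ → ℕ → List (RLetter A) → Prop
  | _, _, _, [] => True
  | _, j, q, .X a :: t => ∃ p ∈ nextOcc u a q, p < j ∧ CondensedFrom u q j p t
  | i, _, q, .Y a :: t => ∃ p ∈ prevOcc u a q, i < p ∧ CondensedFrom u i q p t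

theorem CondensedFrom.mono (hi : i' ≤ i) (hj : j ≤ j') (h : CondensedFrom u i j q r) :
    CondensedFrom u i' j' q r := by
  induction r generalizing i j i' j' q with
  | nil => trivial
  | cons z t ih =>
    cases z with
    | X a =>
      obtain ⟨p, hp, hpj, ht⟩ := h
      exact ⟨p, hp, hpj.trans_le hj, ih le_rfl hj ht⟩
    | Y a =>
      obtain ⟨p, hp, hip, ht⟩ := h
      exact ⟨p, hp, hi.trans_lt hip, ih hi le_rfl ht⟩

theorem condensedFrom_append_iff (x y : List A) (hj : j ≤ u.length + 1) (hq : q ≤ u.length + 1) :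
    CondensedFrom (x ++ u ++ y) (i + x.length) (j + x.length) (q + x.length) r ↔
      CondensedFrom u i j q r := by
  induction r generalizing i j q with
  | nil => rfl
  | cons z t ih =>
    cases z with
    | X a =>
      constructor
      · rintro ⟨p, hp, hpj, ht⟩
        have hqp := lt_of_mem_nextOcc hp
        obtain ⟨p, rfl⟩ := Nat.exists_eq_add_of_le' (show x.length ≤ p by omega)
        exact ⟨p, (add_length_mem_nextOcc_iff x y (by omega)).1 hp, by omega,
          (ih hj (by omega)).1 ht⟩
      · rintro ⟨p, hp, hpj, ht⟩
        have hpu := le_length_of_mem_occ (mem_occ_of_mem_nextOcc hp)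
        exact ⟨p + x.length, (add_length_mem_nextOcc_iff x y hpu).2 hp, by omega,
          (ih hj (by omega)).2 ht⟩
    | Y a =>
      constructor
      · rintro ⟨p, hp, hip, ht⟩
        have hpq := lt_of_mem_prevOcc hp
        obtain ⟨p, rfl⟩ := Nat.exists_eq_add_of_le' (show x.length ≤ p by omega)
        exact ⟨p, (add_length_mem_prevOcc_iff x y (by omega) hq).1 hp, by omega,
          (ih hq (by omega)).1 ht⟩
      · rintro ⟨p, hp, hip, ht⟩
        have hpq := lt_of_mem_prevOcc hp
        exact ⟨p + x.length, (add_length_mem_prevOcc_iff x y (by omega) hq).2 hp, by omega,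
          (ih hq (by omega)).2 ht⟩

theorem condensedFrom_map_X_append_iff (ht : t = [] ∨ startsY t) (hq : q < j) (hj : j ≤ j') :
    CondensedFrom u i j q (bs.map RLetter.X ++ t) ↔
      CondensedFrom u i j' q (bs.map RLetter.X ++ t) ∧
        ∃ x ∈ evalFrom u (bs.map RLetter.X) q, x < j := by
  induction bs generalizing i q with
  | nil =>
    have hx : ∃ x ∈ evalFrom u [] q, x < j := ⟨q, rfl, hq⟩
    rcases ht with rfl | ⟨b, s, rfl⟩
    · exact ⟨fun h => ⟨h, hx⟩, And.left⟩
    · exact ⟨fun h => ⟨h, hx⟩, And.left⟩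
  | cons b bs ih =>
    simp only [List.map_cons, mem_evalFrom_cons]
    constructor
    · rintro ⟨p, hp, hpj, h⟩
      obtain ⟨h', x, hx, hxj⟩ := (ih hpj).1 h
      exact ⟨⟨p, hp, hpj.trans_le hj, h'⟩, x, ⟨p, hp, hx⟩, hxj⟩
    · rintro ⟨⟨p, hp, -, h⟩, x, ⟨p', hp', hx⟩, hxj⟩
      obtain rfl := Option.mem_unique hp' hp
      have hpj := (le_of_mem_evalFrom_map_X hx).trans_lt hxj
      exact ⟨p', hp, hpj, (ih hpj).2 ⟨h, x, hx, hxj⟩⟩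

theorem condensedFrom_map_Y_append_iff (ht : t = [] ∨ startsX t) (hq : i < q) (hi : i' ≤ i) :
    CondensedFrom u i j q (bs.map RLetter.Y ++ t) ↔
      CondensedFrom u i' j q (bs.map RLetter.Y ++ t) ∧
        ∃ x ∈ evalFrom u (bs.map RLetter.Y) q, i < x := by
  induction bs generalizing j q with
  | nil =>
    have hx : ∃ x ∈ evalFrom u [] q, i < x := ⟨q, rfl, hq⟩
    rcases ht with rfl | ⟨b, s, rfl⟩
    · exact ⟨fun h => ⟨h, hx⟩, And.left⟩
    · exact ⟨fun h => ⟨h, hx⟩, And.left⟩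
  | cons b bs ih =>
    simp only [List.map_cons, mem_evalFrom_cons]
    constructor
    · rintro ⟨p, hp, hip, h⟩
      obtain ⟨h', x, hx, hix⟩ := (ih hip).1 h
      exact ⟨⟨p, hp, hi.trans_lt hip, h'⟩, x, ⟨p, hp, hx⟩, hix⟩
    · rintro ⟨⟨p, hp, -, h⟩, x, ⟨p', hp', hx⟩, hix⟩
      obtain rfl := Option.mem_unique hp' hp
      have hip := hix.trans_le (le_of_mem_evalFrom_map_Y hx)
      exact ⟨p', hp, hip, (ih hip).2 ⟨h, x, hx, hix⟩⟩

theorem CondensedFrom.of_defined_prefix {u v : List A} (hq : q ≤ u.length)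
    (hdef : (evalFrom u r q).isSome) (h : CondensedFrom (u ++ v) i j q r) :
    CondensedFrom (u ++ v) i (u.length + 1) q r := by
  induction r generalizing i q with
  | nil => trivial
  | cons z t ih =>
    cases z with
    | X a =>
      obtain ⟨p, hp, -, ht⟩ := h
      obtain ⟨x, hx⟩ := Option.isSome_iff_exists.1 hdef
      obtain ⟨p', hp', hx⟩ := mem_evalFrom_cons.1 hx
      have hpu := le_length_of_mem_occ (mem_occ_of_mem_nextOcc hp')
      obtain rfl := Option.mem_unique hp ((add_length_mem_nextOcc_iff [] v hpu).2 hp')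
      exact ⟨_, hp, Nat.lt_succ_of_le hpu, ih hpu (Option.isSome_iff_exists.2 ⟨x, hx⟩) ht⟩
    | Y a => exact h

theorem CondensedFrom.of_defined_suffix {u v : List A} (hq : 1 ≤ q) (hqv : q ≤ v.length + 1)
    (hdef : (evalFrom v r q).isSome) (h : CondensedFrom (u ++ v) i j (q + u.length) r) :
    CondensedFrom (u ++ v) u.length j (q + u.length) r := by
  induction r generalizing j q with
  | nil => trivial
  | cons z t ih =>
    cases z with
    | X a => exact h
    | Y a =>
      obtain ⟨p, hp, -, ht⟩ := h
      obtain ⟨x, hx⟩ := Option.isSome_iff_exists.1 hdef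
      obtain ⟨p', hp', hx⟩ := mem_evalFrom_cons.1 hx
      have hp1 := one_le_of_mem_occ (mem_occ_of_mem_prevOcc hp')
      have hpv := lt_of_mem_prevOcc hp'
      have hshift := (add_length_mem_prevOcc_iff u [] hp1 hqv).2 hp'
      rw [List.append_nil] at hshift
      obtain rfl := Option.mem_unique hp hshift
      exact ⟨_, hp, by omega, ih hp1 (by omega) (Option.isSome_iff_exists.2 ⟨x, hx⟩) ht⟩

end CondensedFrom

section IntervalChains

variable {u : List A} {r t : List (RLetter A)} {z w : RLetter A}
  {i j i₀ j₀ i₁ j₁ p q : ℕ}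

/-- The endpoint of `(i;j)` from which a ranker letter starts searching. -/
def RLetter.source {α : Type*} : RLetter α → ℕ → ℕ → ℕ
  | .X _, i, _ => i
  | .Y _, _, j => j

/-- `(i';j')` is the interval that follows `(i;j)` in a chain witnessing `Condensed`, after reading
`z` and before the letter given last. The four update rules of `Condensed` are merged into two:
the endpoint from which the next letter starts moves to the position reached by `z`. -/
def IntervalStep (u : List A) (z : RLetter A) (i j i' j' : ℕ) : RLetter A → Prop
  | .X _ => i' ∈ stepR u z (z.source i j) ∧ j' = j ∧ i < i'
  | .Y _ => j' ∈ stepR u z (z.source i j) ∧ i' = i ∧ j' < j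

/-- `Condensed` for the nonempty ranker `z :: t` and an arbitrary initial interval `(i₀;j₀)`. -/
def CondensedIn (u : List A) (z : RLetter A) (t : List (RLetter A)) (i₀ j₀ : ℕ) : Prop :=
  ∃ (p : ℕ) (i j : ℕ → ℕ), p ∈ evalFrom u (z :: t) (z.source i₀ j₀) ∧ i 0 = i₀ ∧ j 0 = j₀ ∧
    (∀ ℓ x y, (z :: t)[ℓ]? = some x → (z :: t)[ℓ + 1]? = some y →
      IntervalStep u x (i ℓ) (j ℓ) (i (ℓ + 1)) (j (ℓ + 1)) y) ∧
    i t.length < p ∧ p < j t.length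

theorem evalR_cons : evalR u (z :: t) = evalFrom u (z :: t) (z.source 0 (u.length + 1)) := by
  cases z <;> rfl

theorem Condensed.condensedIn (h : Condensed u (z :: t)) :
    CondensedIn u z t 0 (u.length + 1) := by
  obtain ⟨p, i, j, hp, hi, hj, hXX, hYY, hXY, hYX, hnest, hip, hpj⟩ := h
  refine ⟨p, i, j, evalR_cons.symm.trans hp, hi, hj, fun ℓ x y hx hy => ?_, hip, hpj⟩
  have hℓ : 1 ≤ ℓ + 1 := Nat.le_add_left 1 ℓ
  obtain ⟨-, -, hstrict⟩ := hnest (ℓ + 1) hℓ (List.getElem?_eq_some_iff.1 hy).1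
  rw [Nat.add_sub_cancel] at hstrict
  cases x with
  | X a =>
    cases y with
    | X b =>
      obtain ⟨hi', hj'⟩ := hXX (ℓ + 1) a b hℓ hx hy
      exact ⟨hi', hj', hstrict.resolve_right hj'.not_lt⟩
    | Y b =>
      obtain ⟨hi', hj'⟩ := hXY (ℓ + 1) a b hℓ hx hy
      exact ⟨hj', hi', hstrict.resolve_left hi'.not_gt⟩
  | Y a =>
    cases y with
    | X b =>
      obtain ⟨hi', hj'⟩ := hYX (ℓ + 1) a b hℓ hx hy
      exact ⟨hi', hj', hstrict.resolve_right hj'.not_lt⟩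
    | Y b =>
      obtain ⟨hi', hj'⟩ := hYY (ℓ + 1) a b hℓ hx hy
      exact ⟨hj', hi', hstrict.resolve_left hi'.not_gt⟩

theorem IntervalStep.nested (h : IntervalStep u z i j i₁ j₁ w) :
    i ≤ i₁ ∧ j₁ ≤ j ∧ (i < i₁ ∨ j₁ < j) := by
  cases w with
  | X b => exact ⟨h.2.2.le, h.2.1.le, .inl h.2.2⟩
  | Y b => exact ⟨h.2.1.ge, h.2.2.le, .inr h.2.2⟩

theorem CondensedIn.condensed (h : CondensedIn u z t 0 (u.length + 1)) :
    Condensed u (z :: t) := by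
  obtain ⟨p, i, j, hp, hi, hj, hstep, hip, hpj⟩ := h
  have hstep' : ∀ ℓ x y, 1 ≤ ℓ → (z :: t)[ℓ - 1]? = some x → (z :: t)[ℓ]? = some y →
      IntervalStep u x (i (ℓ - 1)) (j (ℓ - 1)) (i ℓ) (j ℓ) y := by
    intro ℓ x y hℓ hx hy
    obtain ⟨ℓ, rfl⟩ := Nat.exists_eq_add_of_le' hℓ
    exact hstep ℓ x y hx hy
  refine ⟨p, i, j, evalR_cons.trans hp, hi, hj, ?_, ?_, ?_, ?_, ?_, hip, hpj⟩
  · intro ℓ a b hℓ hx hy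
    obtain ⟨hi', hj', -⟩ := hstep' ℓ _ _ hℓ hx hy
    exact ⟨hi', hj'⟩
  · intro ℓ a b hℓ hx hy
    obtain ⟨hj', hi', -⟩ := hstep' ℓ _ _ hℓ hx hy
    exact ⟨hi', hj'⟩
  · intro ℓ a b hℓ hx hy
    obtain ⟨hj', hi', -⟩ := hstep' ℓ _ _ hℓ hx hy
    exact ⟨hi', hj'⟩
  · intro ℓ a b hℓ hx hy
    obtain ⟨hi', hj', -⟩ := hstep' ℓ _ _ hℓ hx hy
    exact ⟨hi', hj'⟩
  · intro ℓ hℓ hlt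
    exact (hstep' ℓ _ _ hℓ (List.getElem?_eq_getElem (by omega))
      (List.getElem?_eq_getElem hlt)).nested

theorem condensedIn_singleton :
    CondensedIn u z [] i j ↔ ∃ p ∈ stepR u z (z.source i j), i < p ∧ p < j := by
  constructor
  · rintro ⟨p, i, j, hp, rfl, rfl, -, hip, hpj⟩
    obtain ⟨p', hp', hp⟩ := mem_evalFrom_cons.1 hp
    obtain rfl := Option.mem_some.1 hp
    exact ⟨_, hp', hip, hpj⟩
  · rintro ⟨p, hp, hip, hpj⟩
    exact ⟨p, fun _ => i, fun _ => j, mem_evalFrom_cons.2 ⟨p, hp, rfl⟩, rfl, rfl,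
      fun ℓ x y _ hy => by simp at hy, hip, hpj⟩

theorem IntervalStep.source_mem_stepR (h : IntervalStep u z i j i₁ j₁ w) :
    w.source i₁ j₁ ∈ stepR u z (z.source i j) := by
  cases w with
  | X b => exact h.1
  | Y b => exact h.1

theorem IntervalStep.evalFrom_source (h : IntervalStep u z i j i₁ j₁ w) :
    evalFrom u (z :: w :: t) (z.source i j) = evalFrom u (w :: t) (w.source i₁ j₁) := by
  rw [evalFrom, Option.mem_def.1 h.source_mem_stepR, Option.bind_some]

theorem condensedIn_cons_cons :
    CondensedIn u z (w :: t) i₀ j₀ ↔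
      ∃ i₁ j₁, IntervalStep u z i₀ j₀ i₁ j₁ w ∧ CondensedIn u w t i₁ j₁ := by
  constructor
  · rintro ⟨p, i, j, hp, rfl, rfl, hstep, hip, hpj⟩
    have hfirst := hstep 0 z w rfl rfl
    exact ⟨i 1, j 1, hfirst, p, fun ℓ => i (ℓ + 1), fun ℓ => j (ℓ + 1),
      hfirst.evalFrom_source ▸ hp, rfl, rfl, fun ℓ => hstep (ℓ + 1), hip, hpj⟩
  · rintro ⟨i₁, j₁, hfirst, p, i, j, hp, rfl, rfl, hstep, hip, hpj⟩
    refine ⟨p, fun | 0 => i₀ | ℓ + 1 => i ℓ, fun | 0 => j₀ | ℓ + 1 => j ℓ,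
      hfirst.evalFrom_source ▸ hp, rfl, rfl, fun ℓ x y hx hy => ?_, hip, hpj⟩
    cases ℓ with
    | zero =>
      obtain rfl := Option.some.inj hx
      obtain rfl := Option.some.inj hy
      exact hfirst
    | succ ℓ => exact hstep ℓ x y hx hy

theorem condensedFrom_source_cons_iff :
    CondensedFrom u i j (z.source i j) (z :: t) ↔
      ∃ p ∈ stepR u z (z.source i j), i < p ∧ p < j ∧ CondensedFrom u i j p t := by
  cases z with
  | X a =>
    exact exists_congr fun p => and_congr_right fun hp =>
      (and_iff_right (lt_of_mem_nextOcc hp)).symm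
  | Y a =>
    exact exists_congr fun p => and_congr_right fun hp => and_congr_right fun _ =>
      (and_iff_right (lt_of_mem_prevOcc hp)).symm

theorem CondensedFrom.left_lt_right (h : CondensedFrom u i j (z.source i j) (z :: t)) : i < j := by
  obtain ⟨p, -, hip, hpj, -⟩ := condensedFrom_source_cons_iff.1 h
  exact hip.trans hpj

theorem exists_intervalStep_condensedFrom_iff :
    (∃ i₁ j₁, IntervalStep u z i j i₁ j₁ w ∧ CondensedFrom u i₁ j₁ (w.source i₁ j₁) (w :: t)) ↔
      CondensedFrom u i j (z.source i j) (z :: w :: t) := by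
  rw [condensedFrom_source_cons_iff]
  constructor
  · rintro ⟨i₁, j₁, hstep, h⟩
    have hlt := h.left_lt_right
    cases w with
    | X b =>
      obtain ⟨hp, rfl, hip⟩ := hstep
      exact ⟨i₁, hp, hip, hlt, h⟩
    | Y b =>
      obtain ⟨hp, rfl, hpj⟩ := hstep
      exact ⟨j₁, hp, hlt, hpj, h⟩
  · rintro ⟨p, hp, hip, hpj, h⟩
    cases w with
    | X b => exact ⟨p, j, ⟨hp, rfl, hip⟩, h⟩
    | Y b => exact ⟨i, p, ⟨hp, rfl, hpj⟩, h⟩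

theorem condensedIn_iff_condensedFrom :
    CondensedIn u z t i j ↔ CondensedFrom u i j (z.source i j) (z :: t) := by
  induction t generalizing z i j with
  | nil => simp only [condensedIn_singleton, condensedFrom_source_cons_iff, CondensedFrom, and_true]
  | cons w t ih =>
    simp only [condensedIn_cons_cons, ih, exists_intervalStep_condensedFrom_iff]

theorem condensed_cons_iff_condensedFrom :
    Condensed u (z :: t) ↔
      CondensedFrom u 0 (u.length + 1) (z.source 0 (u.length + 1)) (z :: t) :=
  ⟨fun h => condensedIn_iff_condensedFrom.1 h.condensedIn,
    fun h => (condensedIn_iff_condensedFrom.2 h).condensed⟩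

theorem condensed_iff_of_startsX (hr : startsX r) :
    Condensed u r ↔ CondensedFrom u 0 (u.length + 1) 0 r := by
  obtain ⟨b, t, rfl⟩ := hr
  exact condensed_cons_iff_condensedFrom

theorem condensed_iff_of_startsY (hr : startsY r) :
    Condensed u r ↔ CondensedFrom u 0 (u.length + 1) (u.length + 1) r := by
  obtain ⟨b, t, rfl⟩ := hr
  exact condensed_cons_iff_condensedFrom

theorem Condensed.defined (h : Condensed u r) : Defined u r := by
  obtain ⟨p, i, j, hp, -⟩ := h
  exact Option.isSome_iff_exists.2 ⟨p, hp⟩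

end IntervalChains

section Factors

variable {u v um up : List A} {r t : List (RLetter A)} {a : A} {bs : List A} {p : ℕ}

theorem condensed_iff_condensedFrom_prefix_of_startsX (v : List A) (hr : startsX r) :
    Condensed u r ↔ CondensedFrom (u ++ v) 0 (u.length + 1) 0 r :=
  (condensed_iff_of_startsX hr).trans
    (condensedFrom_append_iff [] v le_rfl (Nat.zero_le _)).symm

theorem condensed_iff_condensedFrom_prefix_of_startsY (v : List A) (hr : startsY r) :
    Condensed u r ↔ CondensedFrom (u ++ v) 0 (u.length + 1) (u.length + 1) r :=
  (condensed_iff_of_startsY hr).trans (condensedFrom_append_iff [] v le_rfl le_rfl).symm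

theorem condensed_iff_condensedFrom_suffix_of_startsX (u : List A) (hr : startsX r) :
    Condensed v r ↔ CondensedFrom (u ++ v) u.length ((u ++ v).length + 1) u.length r := by
  have hshift := condensedFrom_append_iff (u := v) (i := 0) (r := r) u [] le_rfl (Nat.zero_le _)
  rw [condensed_iff_of_startsX hr, ← hshift, List.append_nil, Nat.zero_add, List.length_append]
  congr! 1; omega

theorem condensed_iff_condensedFrom_suffix_of_startsY (u : List A) (hr : startsY r) :
    Condensed v r ↔
      CondensedFrom (u ++ v) u.length ((u ++ v).length + 1) ((u ++ v).length + 1) r := by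
  have hshift := condensedFrom_append_iff (u := v) (i := 0) (r := r) u [] le_rfl le_rfl
  rw [condensed_iff_of_startsY hr, ← hshift, List.append_nil, Nat.zero_add, List.length_append]
  congr! 1 <;> omega

theorem condensed_X_cons_iff (hp : p ∈ nextOcc u a 0) :
    Condensed u (RLetter.X a :: r) ↔ CondensedFrom u 0 (u.length + 1) p r := by
  rw [condensed_iff_of_startsX ⟨a, r, rfl⟩]
  have hpu := le_length_of_mem_occ (mem_occ_of_mem_nextOcc hp)
  constructor
  · rintro ⟨p', hp', -, h⟩
    obtain rfl := Option.mem_unique hp hp'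
    exact h
  · exact fun h => ⟨p, hp, by omega, h⟩

theorem condensed_suffix_iff_condensed_X_cons (ha : a ∉ um) (hr : startsX r) :
    Condensed up r ↔ Condensed (um ++ a :: up) (RLetter.X a :: r) := by
  rw [condensed_X_cons_iff (length_add_one_mem_nextOcc_append_cons ha), List.append_cons,
    condensed_iff_condensedFrom_suffix_of_startsX (um ++ [a]) hr, List.length_append (as := um)]
  obtain ⟨b, t, rfl⟩ := hr
  rfl

theorem condensed_prefix_iff_condensed_X_cons (ha : a ∉ um) (hr : startsY r) :
    Condensed um r ↔ Condensed (um ++ a :: up) (RLetter.X a :: r) := by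
  rw [condensed_X_cons_iff (length_add_one_mem_nextOcc_append_cons ha),
    condensed_iff_condensedFrom_prefix_of_startsY (a :: up) hr]
  obtain ⟨b, t, rfl⟩ := hr
  rfl

theorem condensed_prefix_iff_defined (hr : startsX r) :
    Condensed u r ↔ Defined u r ∧ Condensed (u ++ v) r := by
  have hlen : u.length ≤ (u ++ v).length := (List.prefix_append u v).length_le
  constructor
  · refine fun h => ⟨h.defined, (condensed_iff_of_startsX hr).2 ?_⟩
    exact ((condensed_iff_condensedFrom_prefix_of_startsX v hr).1 h).mono le_rfl (by omega)
  · rintro ⟨hdef, h⟩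
    rw [Defined, evalR_of_startsX hr] at hdef
    exact (condensed_iff_condensedFrom_prefix_of_startsX v hr).2
      (((condensed_iff_of_startsX hr).1 h).of_defined_prefix (Nat.zero_le _) hdef)

theorem condensed_suffix_iff_defined (hr : startsY r) :
    Condensed v r ↔ Defined v r ∧ Condensed (u ++ v) r := by
  constructor
  · refine fun h => ⟨h.defined, (condensed_iff_of_startsY hr).2 ?_⟩
    exact ((condensed_iff_condensedFrom_suffix_of_startsY u hr).1 h).mono (Nat.zero_le _) le_rfl
  · rintro ⟨hdef, h⟩
    rw [Defined, evalR_of_startsY hr] at hdef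
    rw [condensed_iff_condensedFrom_suffix_of_startsY u hr]
    rw [condensed_iff_of_startsY hr] at h
    have hlen : (u ++ v).length + 1 = v.length + 1 + u.length := by
      rw [List.length_append]; omega
    rw [hlen] at h ⊢
    exact h.of_defined_suffix (Nat.le_add_left 1 _) le_rfl hdef

theorem condensed_prefix_iff_exists_lt (hr : startsX (bs.map RLetter.X ++ t))
    (ht : t = [] ∨ startsY t) :
    Condensed u (bs.map RLetter.X ++ t) ↔ Condensed (u ++ v) (bs.map RLetter.X ++ t) ∧
      ∃ x ∈ evalFrom (u ++ v) (bs.map RLetter.X) 0, x < u.length + 1 := by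
  rw [condensed_iff_condensedFrom_prefix_of_startsX v hr, condensed_iff_of_startsX hr]
  exact condensedFrom_map_X_append_iff ht (Nat.succ_pos _) (by simp)

theorem condensed_suffix_iff_exists_gt (hr : startsY (bs.map RLetter.Y ++ t))
    (ht : t = [] ∨ startsX t) :
    Condensed v (bs.map RLetter.Y ++ t) ↔ Condensed (u ++ v) (bs.map RLetter.Y ++ t) ∧
      ∃ x ∈ evalFrom (u ++ v) (bs.map RLetter.Y) ((u ++ v).length + 1), u.length < x := by
  rw [condensed_iff_condensedFrom_suffix_of_startsY u hr, condensed_iff_of_startsY hr]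
  exact condensedFrom_map_Y_append_iff ht (by simp) (Nat.zero_le _)

theorem condensed_prefix_iff_defined_block (ha : a ∉ um)
    (hr : startsX (bs.map RLetter.X ++ t)) (ht : t = [] ∨ startsY t) :
    Condensed um (bs.map RLetter.X ++ t) ↔
      Condensed (um ++ a :: up) (bs.map RLetter.X ++ t) ∧
        Defined (um ++ a :: up) (RLetter.X a :: bs.reverse.map RLetter.Y) := by
  rw [defined_X_cons_reverse_map_Y_iff (length_add_one_mem_nextOcc_append_cons ha),
    condensed_prefix_iff_exists_lt hr ht]

theorem condensed_suffix_iff_defined_block (ha : a ∉ um)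
    (hr : startsY (bs.map RLetter.Y ++ t)) (ht : t = [] ∨ startsX t) :
    Condensed up (bs.map RLetter.Y ++ t) ↔
      Condensed (um ++ a :: up) (bs.map RLetter.Y ++ t) ∧
        Defined (um ++ a :: up) (bs.map RLetter.Y ++ [RLetter.Y a]) := by
  rw [defined_map_Y_append_Y_iff (length_add_one_mem_nextOcc_append_cons ha), List.append_cons,
    condensed_suffix_iff_exists_gt (u := um ++ [a]) hr ht, List.length_append (as := um)]
  rfl

theorem Condensed.letter_not_mem (ha : a ∉ u) (h : Condensed u r) :
    RLetter.X a ∉ r ∧ RLetter.Y a ∉ r :=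
  ⟨fun hX => ha (letter_mem_of_defined h.defined hX),
    fun hY => ha (letter_mem_of_defined h.defined hY)⟩

end Factors

/-- Basics on rankers and the `a`-left factorization `u = um ++ a :: up`
(with `a ∉ alph um`). -/
theorem statement2 (a : A) (r : List (RLetter A)) (hr : r ≠ [])
    (um up : List A) (hnot : a ∉ um) :
    (startsX r →
      ((Condensed up r ↔ Condensed (um ++ a :: up) (RLetter.X a :: r)) ∧
       (Condensed um r ↔ (Defined um r ∧ Condensed (um ++ a :: up) r)) ∧
       (∀ (bs : List A) (t : List (RLetter A)), bs ≠ [] →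
          r = bs.map RLetter.X ++ t → (t = [] ∨ startsY t) →
          (Condensed um r ↔
            (Condensed (um ++ a :: up) r ∧ RLetter.X a ∉ r ∧ RLetter.Y a ∉ r ∧
             Defined (um ++ a :: up) (RLetter.X a :: bs.reverse.map RLetter.Y)))))) ∧
    (startsY r →
      ((Condensed um r ↔ Condensed (um ++ a :: up) (RLetter.X a :: r)) ∧
       (Condensed up r ↔ (Defined up r ∧ Condensed (um ++ a :: up) r)) ∧
       (∀ (bs : List A) (t : List (RLetter A)), bs ≠ [] →
          r = bs.map RLetter.Y ++ t → (t = [] ∨ startsX t) →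
          (Condensed up r ↔
            (Condensed (um ++ a :: up) r ∧
             Defined (um ++ a :: up) (bs.map RLetter.Y ++ [RLetter.Y a])))))) := by
  constructor
  · intro hX
    refine ⟨condensed_suffix_iff_condensed_X_cons hnot hX, condensed_prefix_iff_defined hX, ?_⟩
    rintro bs t - rfl ht
    have hblock := condensed_prefix_iff_defined_block (up := up) hnot hX ht
    constructor
    · intro h
      obtain ⟨hXa, hYa⟩ := h.letter_not_mem hnot
      obtain ⟨hc, hdef⟩ := hblock.1 h
      exact ⟨hc, hXa, hYa, hdef⟩
    · rintro ⟨hc, -, -, hdef⟩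
      exact hblock.2 ⟨hc, hdef⟩
  · intro hY
    refine ⟨condensed_prefix_iff_condensed_X_cons hnot hY, ?_, ?_⟩
    · rw [List.append_cons]
      exact condensed_suffix_iff_defined hY
    · rintro bs t - rfl ht
      exact condensed_suffix_iff_defined_block hnot hY ht

end RankerPaper
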